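/- Let P ∈ [0,1]^{n×m} be monotone, i.e., P_{ij} ≥ P_{i'j'} whenever i ≤ i' and j ≤ j'. Let i* be a maximizer of i ↦ i · P_{ii} over i ∈ [min{n,m}]. Then for every pair (i,j) with i ≤ i* and j ≤ i*, the index i* is a maximizer of the map k ↦ k · min{ P_{max{i,k},k}, P_{k,max{j,k}} } over k ∈ [min{n,m}]; that is, k*(i,j) = i*. -/

import Mathlib

/-!
By antitonicity down column `k`, the minimum of `P (max i k) k` and `P k (max j k)` is at most
`P k k`, with equality as soon as `i ≤ k` and `j ≤ k`. So the objective for `(i, j)` lies below the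
diagonal objective and touches it at a maximizer of the latter.
-/

section DiagonalMaximizer

variable {ι R : Type*} [LinearOrder ι] [LinearOrder R] {P : ι → ι → R} {s : Set ι} {i j k : ι}

theorem min_apply_max_le_diag (hcol : AntitoneOn (P · k) s) (hi : i ∈ s) (hk : k ∈ s) :
    min (P (max i k) k) (P k (max j k)) ≤ P k k :=
  min_le_of_left_le (hcol hk (max_rec' (· ∈ s) hi hk) (le_max_right i k))

theorem min_apply_max_eq_diag (hi : i ≤ k) (hj : j ≤ k) :
    min (P (max i k) k) (P k (max j k)) = P k k := by
  rw [max_eq_right hi, max_eq_right hj, min_self]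

theorem stmt_4_general [Mul R] [Zero R] [PosMulMono R] {w : ι → R} {istar : ι}
    (hw : ∀ k ∈ s, 0 ≤ w k) (hcol : ∀ k ∈ s, AntitoneOn (P · k) s)
    (hmax : IsMaxOn (fun k ↦ w k * P k k) s istar)
    (his : i ∈ s) (hi : i ≤ istar) (hj : j ≤ istar) :
    IsMaxOn (fun k ↦ w k * min (P (max i k) k) (P k (max j k))) s istar := by
  refine isMaxOn_iff.mpr fun k hk ↦ ?_
  calc
    w k * min (P (max i k) k) (P k (max j k)) ≤ w k * P k k :=
      mul_le_mul_of_nonneg_left (min_apply_max_le_diag (hcol k hk) his hk) (hw k hk)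
    _ ≤ w istar * P istar istar := isMaxOn_iff.mp hmax k hk
    _ = w istar * min (P (max i istar) istar) (P istar (max j istar)) := by
      rw [min_apply_max_eq_diag hi hj]

end DiagonalMaximizer

/-- For a monotone probability matrix `P` (indexed by `[1..n] × [1..m]`,
with `P i j ≥ P i' j'` whenever `i ≤ i'` and `j ≤ j'`), if `i*` maximizes
`i ↦ i ⬝ P i i` over `[min{n,m}]`, then for every `(i,j)` with `i ≤ i*` and `j ≤ i*`,
the index `i*` maximizes `k ↦ k ⬝ min {P (max i k) k, P k (max j k)}` over `[min{n,m}]`;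
that is, `k*(i,j) = i*`. -/
theorem stmt_4 (n m : ℕ) (P : ℕ → ℕ → ℝ)
    (hP : ∀ i j, 1 ≤ i → i ≤ n → 1 ≤ j → j ≤ m → P i j ∈ Set.Icc (0 : ℝ) 1)
    (hmono : ∀ i i' j j', 1 ≤ i → i ≤ i' → i' ≤ n → 1 ≤ j → j ≤ j' → j' ≤ m →
      P i' j' ≤ P i j)
    (istar : ℕ) (histar1 : 1 ≤ istar) (histar2 : istar ≤ min n m)
    (hmax : ∀ k, 1 ≤ k → k ≤ min n m →
      (k : ℝ) * P k k ≤ (istar : ℝ) * P istar istar)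
    (i j : ℕ) (hi1 : 1 ≤ i) (hi : i ≤ istar) (hj1 : 1 ≤ j) (hj : j ≤ istar) :
    ∀ k, 1 ≤ k → k ≤ min n m →
      (k : ℝ) * min (P (max i k) k) (P k (max j k)) ≤
        (istar : ℝ) * min (P (max i istar) istar) (P istar (max j istar)) := by
  have hcol : ∀ k ∈ Set.Icc 1 (min n m), AntitoneOn (P · k) (Set.Icc 1 (min n m)) :=
    fun k hk a ha b hb hab ↦ hmono a b k k ha.1 hab (le_min_iff.mp hb.2).1 hk.1 le_rfl
      (le_min_iff.mp hk.2).2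
  intro k hk1 hk
  exact stmt_4_general (w := Nat.cast) (fun k _ ↦ Nat.cast_nonneg k) hcol
    (fun k hk ↦ hmax k hk.1 hk.2) ⟨hi1, hi.trans histar2⟩ hi hj ⟨hk1, hk⟩
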